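/- Suppose a design d and a real number x satisfy: (i) ∑_{s∈Q} p_s [Ĉ_{s11} + x Ĉ_{s12}] = (y*/(t−1)) B_t; (ii) ∑_{s∈Q} p_s [Ĉ_{s21} + x Ĉ_{s22}] = 0; (iii) ∑_{s∈Q} p_s B̃ (T_s + x F_s) B_t = 0; (iv) ∑_{s∈Q} p_s = 1; (v) p_s = 0 for every s ∉ Q. Then for every λ0 ∈ ℝ and every exchangeable prior g, the design d is E_{g,λ0}-optimal. -/

import Mathlib

open Matrix MeasureTheory
open scoped Classical

noncomputable section

/-- A treatment sequence: assigns a treatment in `Fin t` to each period in `Fin p`. -/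
abbrev TrtSeq (p t : ℕ) := Fin p → Fin t

/-- Treatment/period incidence matrix `T_s`. -/
def Tmat {p t : ℕ} (s : TrtSeq p t) : Matrix (Fin p) (Fin t) ℝ :=
  Matrix.of fun k i => if s k = i then 1 else 0

/-- Carryover incidence matrix `F_s`: first row zero, row `k` records the treatment
in period `k-1`. -/
def Fmat {p t : ℕ} (s : TrtSeq p t) : Matrix (Fin p) (Fin t) ℝ :=
  Matrix.of fun k i =>
    if (k : ℕ) = 0 then 0
    else if s ⟨(k : ℕ) - 1, Nat.lt_of_le_of_lt (Nat.sub_le _ _) k.isLt⟩ = i then 1 else 0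

/-- The all-ones `m × m` matrix `J_m`. -/
def Jmat (m : ℕ) : Matrix (Fin m) (Fin m) ℝ := Matrix.of fun _ _ => 1

/-- `B_t = I_t - J_t / t`. -/
def Bmat (t : ℕ) : Matrix (Fin t) (Fin t) ℝ := 1 - ((t : ℝ))⁻¹ • Jmat t

/-- `B̃ = Σ⁻¹ - Σ⁻¹ J_p Σ⁻¹ / (1_p' Σ⁻¹ 1_p)`. -/
def Btil {p : ℕ} (S : Matrix (Fin p) (Fin p) ℝ) : Matrix (Fin p) (Fin p) ℝ :=
  S⁻¹ - (((fun _ => (1 : ℝ)) : Fin p → ℝ) ⬝ᵥ (S⁻¹ *ᵥ fun _ => (1 : ℝ)))⁻¹ •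
    (S⁻¹ * Jmat p * S⁻¹)

/-- `G_1(s) = T_s`, `G_2(s) = F_s`. -/
def Gmat {p t : ℕ} (i : Fin 2) (s : TrtSeq p t) : Matrix (Fin p) (Fin t) ℝ :=
  if i = 0 then Tmat s else Fmat s

/-- An approximate design: nonnegative weights summing to one. -/
def IsDesign {p t : ℕ} (w : TrtSeq p t → ℝ) : Prop :=
  (∀ s, 0 ≤ w s) ∧ ∑ s : TrtSeq p t, w s = 1

/-- `Ĉ_{sij} = B_t G_i(s)' B̃ G_j(s) B_t`. -/
def Chat {p t : ℕ} (S : Matrix (Fin p) (Fin p) ℝ) (s : TrtSeq p t) (i j : Fin 2) :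
    Matrix (Fin t) (Fin t) ℝ :=
  Bmat t * (Gmat i s)ᵀ * Btil S * Gmat j s * Bmat t

/-- `c_{sij} = tr Ĉ_{sij}`. -/
def cseq {p t : ℕ} (S : Matrix (Fin p) (Fin p) ℝ) (s : TrtSeq p t) (i j : Fin 2) : ℝ :=
  (Chat S s i j).trace

/-- `Ĉ_{dij} = n ∑_s p_s Ĉ_{sij}`. -/
def ChatD {p t : ℕ} (n : ℕ) (S : Matrix (Fin p) (Fin p) ℝ) (w : TrtSeq p t → ℝ)
    (i j : Fin 2) : Matrix (Fin t) (Fin t) ℝ :=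
  (n : ℝ) • ∑ s : TrtSeq p t, w s • Chat S s i j

/-- `C_{dij} = Ĉ_{dij} - n (∑_s p_s G_i(s) B_t)' B̃ (∑_s p_s G_j(s) B_t)`. -/
def CD {p t : ℕ} (n : ℕ) (S : Matrix (Fin p) (Fin p) ℝ) (w : TrtSeq p t → ℝ)
    (i j : Fin 2) : Matrix (Fin t) (Fin t) ℝ :=
  ChatD n S w i j -
    (n : ℝ) • ((∑ s : TrtSeq p t, w s • (Gmat i s * Bmat t))ᵀ * Btil S *
      (∑ s : TrtSeq p t, w s • (Gmat j s * Bmat t)))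

/-- `c_{dij} = tr Ĉ_{dij} = n ∑_s p_s c_{sij}`. -/
def cD {p t : ℕ} (n : ℕ) (S : Matrix (Fin p) (Fin p) ℝ) (w : TrtSeq p t → ℝ)
    (i j : Fin 2) : ℝ :=
  (ChatD n S w i j).trace

/-- Fisher information matrix `C_{d,τ0,λ0}` for the direct treatment effects under the
proportional model. -/
def CInfo {p t : ℕ} (n : ℕ) (S : Matrix (Fin p) (Fin p) ℝ) (w : TrtSeq p t → ℝ)
    (τ0 : Fin t → ℝ) (l0 : ℝ) : Matrix (Fin t) (Fin t) ℝ :=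
  CD n S w 0 0 + l0 • (CD n S w 0 1 + CD n S w 1 0) + (l0 ^ 2) • CD n S w 1 1 -
    (τ0 ⬝ᵥ (CD n S w 1 1 *ᵥ τ0))⁻¹ •
      ((CD n S w 0 1 + l0 • CD n S w 1 1) * vecMulVec τ0 τ0 *
        (CD n S w 1 0 + l0 • CD n S w 1 1))

/-- Permutation matrix `S_σ` with `(S_σ)_{j,i} = 1` iff `i = σ j`. -/
def Smat {t : ℕ} (σ : Equiv.Perm (Fin t)) : Matrix (Fin t) (Fin t) ℝ :=
  Matrix.of fun j i => if i = σ j then 1 else 0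

/-- The relabelled sequence `σ ∘ s`. -/
def permSeq {p t : ℕ} (σ : Equiv.Perm (Fin t)) (s : TrtSeq p t) : TrtSeq p t := fun k => σ (s k)

/-- The design `σ d`, with weights `(σd)_s = p_{σ⁻¹ ∘ s}`. -/
def permDesign {p t : ℕ} (σ : Equiv.Perm (Fin t)) (w : TrtSeq p t → ℝ) : TrtSeq p t → ℝ :=
  fun s => w (permSeq σ⁻¹ s)

/-- A design is symmetric if its weights are invariant under treatment relabelling. -/
def IsSymmetricDesign {p t : ℕ} (w : TrtSeq p t → ℝ) : Prop :=
  ∀ (σ : Equiv.Perm (Fin t)) (s : TrtSeq p t), w (permSeq σ s) = w s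

/-- The symmetrized design `d*` with weights `p*_s = (1/t!) ∑_σ p_{σ⁻¹ ∘ s}`. -/
def symmetrize {p t : ℕ} (w : TrtSeq p t → ℝ) : TrtSeq p t → ℝ :=
  fun s => ((Nat.factorial t : ℝ))⁻¹ * ∑ σ : Equiv.Perm (Fin t), permDesign σ w s

/-- `q_s(x) = c_{s11} + 2 c_{s12} x + c_{s22} x²`. -/
def qSeq {p t : ℕ} (S : Matrix (Fin p) (Fin p) ℝ) (s : TrtSeq p t) (x : ℝ) : ℝ :=
  cseq S s 0 0 + 2 * cseq S s 0 1 * x + cseq S s 1 1 * x ^ 2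

/-- `q(x) = max_{s ∈ S} q_s(x)`. -/
def qMax (p t : ℕ) (S : Matrix (Fin p) (Fin p) ℝ) (x : ℝ) : ℝ :=
  sSup (Set.range fun s : TrtSeq p t => qSeq S s x)

/-- `y* = inf_x q(x)`. -/
def yStar (p t : ℕ) (S : Matrix (Fin p) (Fin p) ℝ) : ℝ := ⨅ x : ℝ, qMax p t S x

/-- `q_d(x) = ∑_s p_s q_s(x)`. -/
def qD {p t : ℕ} (S : Matrix (Fin p) (Fin p) ℝ) (w : TrtSeq p t → ℝ) (x : ℝ) : ℝ :=
  ∑ s : TrtSeq p t, w s * qSeq S s x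

/-- `x_d = -c_{d12}/c_{d22}`. -/
def xD {p t : ℕ} (n : ℕ) (S : Matrix (Fin p) (Fin p) ℝ) (w : TrtSeq p t → ℝ) : ℝ :=
  -(cD n S w 0 1) / cD n S w 1 1

/-- An exchangeable prior: a probability measure on `{τ : 1'τ = 0, τ ≠ 0}` that is
invariant under all coordinate permutations of `ℝ^t`. -/
def IsExchangeablePrior {t : ℕ} (g : Measure (Fin t → ℝ)) : Prop :=
  IsProbabilityMeasure g ∧
    g {τ : Fin t → ℝ | ¬((∑ i, τ i) = 0 ∧ τ ≠ 0)} = 0 ∧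
    ∀ σ : Equiv.Perm (Fin t), Measure.map (fun τ i => τ (σ i)) g = g

/-- `m_d(τ0) = min {ℓ' C_{d,τ0,λ0} ℓ : 1'ℓ = 0, ℓ'ℓ = 1}`. -/
def mD {p t : ℕ} (n : ℕ) (S : Matrix (Fin p) (Fin p) ℝ) (w : TrtSeq p t → ℝ) (l0 : ℝ)
    (τ0 : Fin t → ℝ) : ℝ :=
  sInf {v : ℝ | ∃ l : Fin t → ℝ, (∑ i, l i) = 0 ∧ l ⬝ᵥ l = 1 ∧
    v = l ⬝ᵥ (CInfo n S w τ0 l0 *ᵥ l)}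

/-- The E-criterion value `E_{g,λ0}(d) = ∫ m_d(τ0) g(dτ0)`. -/
def Ecrit {p t : ℕ} (n : ℕ) (S : Matrix (Fin p) (Fin p) ℝ) (g : Measure (Fin t → ℝ))
    (l0 : ℝ) (w : TrtSeq p t → ℝ) : ℝ :=
  ∫ τ0, mD n S w l0 τ0 ∂g

/-- Competing designs for E-optimality: designs with a.e. positive `τ0' C_{d22} τ0`
and `g`-integrable `m_d`. -/
def EAdmissible {p t : ℕ} (n : ℕ) (S : Matrix (Fin p) (Fin p) ℝ) (g : Measure (Fin t → ℝ))
    (l0 : ℝ) (w : TrtSeq p t → ℝ) : Prop :=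
  IsDesign w ∧ (∀ᵐ τ0 ∂g, 0 < τ0 ⬝ᵥ (CD n S w 1 1 *ᵥ τ0)) ∧
    Integrable (mD n S w l0) g

/-- `d` is `E_{g,λ0}`-optimal. -/
def EOptimal {p t : ℕ} (n : ℕ) (S : Matrix (Fin p) (Fin p) ℝ) (g : Measure (Fin t → ℝ))
    (l0 : ℝ) (w : TrtSeq p t → ℝ) : Prop :=
  ∀ w' : TrtSeq p t → ℝ, EAdmissible n S g l0 w' → Ecrit n S g l0 w' ≤ Ecrit n S g l0 w

/-- A pseudo symmetric design: treatments equireplicated in each period,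
and all `C_{dij}` completely symmetric. -/
def IsPseudoSymmetric {p t : ℕ} (n : ℕ) (S : Matrix (Fin p) (Fin p) ℝ)
    (w : TrtSeq p t → ℝ) : Prop :=
  (∀ (k : Fin p) (i : Fin t),
    (∑ s ∈ Finset.univ.filter fun s : TrtSeq p t => s k = i, w s) = 1 / (t : ℝ)) ∧
  ∀ i j : Fin 2, ∃ a b : ℝ, CD n S w i j = a • (1 : Matrix (Fin t) (Fin t) ℝ) + b • Jmat t

/-- Eigenvalues of a (Hermitian) matrix sorted increasingly with multiplicity. -/
def sortedEigs {t : ℕ} (C : Matrix (Fin t) (Fin t) ℝ) : Fin t → ℝ :=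
  if h : C.IsHermitian then (fun i => h.eigenvalues (Tuple.sort h.eigenvalues i))
  else fun _ => 0

/-- `Φ_D(C) = (∏_{i=1}^{t-1} a_i)^{1/(t-1)}` (eigenvalues sorted increasingly). -/
def PhiD {t : ℕ} (C : Matrix (Fin t) (Fin t) ℝ) : ℝ :=
  (∏ i ∈ Finset.univ.filter fun i : Fin t => (i : ℕ) ≠ 0, sortedEigs C i) ^ (((t : ℝ) - 1)⁻¹)

/-- `Φ_A(C) = (t-1)(∑_{i=1}^{t-1} a_i⁻¹)⁻¹` if `a_1 > 0`, else `0`. -/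
def PhiA {t : ℕ} (C : Matrix (Fin t) (Fin t) ℝ) : ℝ :=
  if ∀ i : Fin t, (i : ℕ) ≠ 0 → 0 < sortedEigs C i then
    ((t : ℝ) - 1) *
      (∑ i ∈ Finset.univ.filter fun i : Fin t => (i : ℕ) ≠ 0, (sortedEigs C i)⁻¹)⁻¹
  else 0

/-- `Φ_T(C) = tr(C)/(t-1)`. -/
def PhiT {t : ℕ} (C : Matrix (Fin t) (Fin t) ℝ) : ℝ := C.trace / ((t : ℝ) - 1)

/-- The criterion value `∫ Φ(C_{d,τ0,λ0}) g(dτ0)`. -/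
def PhiCrit {p t : ℕ} (n : ℕ) (S : Matrix (Fin p) (Fin p) ℝ)
    (Phi : Matrix (Fin t) (Fin t) ℝ → ℝ) (g : Measure (Fin t → ℝ)) (l0 : ℝ)
    (w : TrtSeq p t → ℝ) : ℝ :=
  ∫ τ0, Phi (CInfo n S w τ0 l0) ∂g

/-- Competing designs for a `Φ`-criterion. -/
def PhiAdmissible {p t : ℕ} (n : ℕ) (S : Matrix (Fin p) (Fin p) ℝ)
    (Phi : Matrix (Fin t) (Fin t) ℝ → ℝ) (g : Measure (Fin t → ℝ)) (l0 : ℝ)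
    (w : TrtSeq p t → ℝ) : Prop :=
  IsDesign w ∧ (∀ᵐ τ0 ∂g, 0 < τ0 ⬝ᵥ (CD n S w 1 1 *ᵥ τ0)) ∧
    Integrable (fun τ0 => Phi (CInfo n S w τ0 l0)) g

/-- `d` is `Φ_{g,λ0}`-optimal. -/
def PhiOptimal {p t : ℕ} (n : ℕ) (S : Matrix (Fin p) (Fin p) ℝ)
    (Phi : Matrix (Fin t) (Fin t) ℝ → ℝ) (g : Measure (Fin t → ℝ)) (l0 : ℝ)
    (w : TrtSeq p t → ℝ) : Prop :=
  ∀ w' : TrtSeq p t → ℝ, PhiAdmissible n S Phi g l0 w' →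
    PhiCrit n S Phi g l0 w' ≤ PhiCrit n S Phi g l0 w

/-- `H_1(s) = F_s`, `H_2(s) = T_s + λ0 F_s` (for estimating `λ`). -/
def Hmat {p t : ℕ} (l0 : ℝ) (i : Fin 2) (s : TrtSeq p t) : Matrix (Fin p) (Fin t) ℝ :=
  if i = 0 then Fmat s else Tmat s + l0 • Fmat s

/-- `Â_{sij} = B_t H_i(s)' B̃ H_j(s) B_t`. -/
def Ahat {p t : ℕ} (S : Matrix (Fin p) (Fin p) ℝ) (l0 : ℝ) (s : TrtSeq p t) (i j : Fin 2) :
    Matrix (Fin t) (Fin t) ℝ :=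
  Bmat t * (Hmat l0 i s)ᵀ * Btil S * Hmat l0 j s * Bmat t

/-- `h_{sij} = tr Â_{sij}`. -/
def hseq {p t : ℕ} (S : Matrix (Fin p) (Fin p) ℝ) (l0 : ℝ) (s : TrtSeq p t) (i j : Fin 2) : ℝ :=
  (Ahat S l0 s i j).trace

/-- `Â_{dij} = n ∑_s p_s Â_{sij}`. -/
def AhatD {p t : ℕ} (n : ℕ) (S : Matrix (Fin p) (Fin p) ℝ) (l0 : ℝ) (w : TrtSeq p t → ℝ)
    (i j : Fin 2) : Matrix (Fin t) (Fin t) ℝ :=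
  (n : ℝ) • ∑ s : TrtSeq p t, w s • Ahat S l0 s i j

/-- `A_{dij} = Â_{dij} - n (∑_s p_s H_i(s) B_t)' B̃ (∑_s p_s H_j(s) B_t)`. -/
def AD {p t : ℕ} (n : ℕ) (S : Matrix (Fin p) (Fin p) ℝ) (l0 : ℝ) (w : TrtSeq p t → ℝ)
    (i j : Fin 2) : Matrix (Fin t) (Fin t) ℝ :=
  AhatD n S l0 w i j -
    (n : ℝ) • ((∑ s : TrtSeq p t, w s • (Hmat l0 i s * Bmat t))ᵀ * Btil S *
      (∑ s : TrtSeq p t, w s • (Hmat l0 j s * Bmat t)))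

/-- `G` is a generalized inverse of `A`. -/
def IsGInv {t : ℕ} (A G : Matrix (Fin t) (Fin t) ℝ) : Prop := A * G * A = A

/-- `A_d(G) = A_{d11} - A_{d12} G A_{d21}` with `A_{d21} = A_{d12}'`. -/
def ADfun {p t : ℕ} (n : ℕ) (S : Matrix (Fin p) (Fin p) ℝ) (l0 : ℝ) (w : TrtSeq p t → ℝ)
    (G : Matrix (Fin t) (Fin t) ℝ) : Matrix (Fin t) (Fin t) ℝ :=
  AD n S l0 w 0 0 - AD n S l0 w 0 1 * G * (AD n S l0 w 0 1)ᵀ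

/-- `r_s(x) = h_{s11} + 2 h_{s12} x + h_{s22} x²`. -/
def rSeq {p t : ℕ} (S : Matrix (Fin p) (Fin p) ℝ) (l0 : ℝ) (s : TrtSeq p t) (x : ℝ) : ℝ :=
  hseq S l0 s 0 0 + 2 * hseq S l0 s 0 1 * x + hseq S l0 s 1 1 * x ^ 2

/-- `r(x) = max_s r_s(x)`. -/
def rMax (p t : ℕ) (S : Matrix (Fin p) (Fin p) ℝ) (l0 : ℝ) (x : ℝ) : ℝ :=
  sSup (Set.range fun s : TrtSeq p t => rSeq S l0 s x)

/-- `y_0 = inf_x r(x)`. -/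
def yZero (p t : ℕ) (S : Matrix (Fin p) (Fin p) ℝ) (l0 : ℝ) : ℝ := ⨅ x : ℝ, rMax p t S l0 x

/-!
Upper bound: along `τ` itself the information is a Schur complement, that is, a minimum over `x` of
quadratic forms in `T_s + x F_s` that no longer involve `λ0`. Hence for every `x` the E-criterion is
at most the prior average of the Rayleigh quotient at `τ` of
`n ∑ p_s B_t (T_s + x F_s)' B̃ (T_s + x F_s) B_t`. Under an exchangeable prior the direction of `τ`
has second moment `B_t / (t - 1)`, so this average is the trace of that matrix over `t - 1`,
which is `n q_d(x) / (t - 1)`. At `x = x*` it is at most `n y* / (t - 1)`.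

Attainment: the design equations turn the information matrix into `n y* / (t - 1) B_t` plus
`(λ0 - x)²` times the deflation of `C_{d22}` along `τ`. The second term is positive semidefinite and
kills `τ`, so the minimum over contrasts is `n y* / (t - 1)` for every `τ`.
-/

section Deflation

variable {m : Type*} [Fintype m]

/-- The deflation `A - A u u' A / (u' A u)` of a symmetric matrix `A` along the vector `u`: the
Schur complement that removes `u` from `A`. Nothing is subtracted when `u' A u = 0`. The matrix `B̃`
is the deflation of `Σ⁻¹` along the all-ones vector. -/
def deflate (A : Matrix m m ℝ) (u : m → ℝ) : Matrix m m ℝ :=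
  A - (u ⬝ᵥ (A *ᵥ u))⁻¹ • (A * vecMulVec u u * A)

lemma deflate_mulVec_self {A : Matrix m m ℝ} (hA : A.PosSemidef) (u : m → ℝ) :
    deflate A u *ᵥ u = 0 := by
  have hexpand : deflate A u *ᵥ u = (1 - (u ⬝ᵥ (A *ᵥ u))⁻¹ * (u ⬝ᵥ (A *ᵥ u))) • (A *ᵥ u) := by
    simp only [deflate, sub_mulVec, smul_mulVec, ← mulVec_mulVec, vecMulVec_mulVec, mulVec_smul,
      op_smul_eq_smul, sub_smul, one_smul, mul_smul]
  rw [hexpand]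
  by_cases hr : u ⬝ᵥ (A *ᵥ u) = 0
  · rw [(hA.dotProduct_mulVec_zero_iff u).1 hr, smul_zero]
  · rw [inv_mul_cancel₀ hr, sub_self, zero_smul]

lemma posSemidef_deflate {A : Matrix m m ℝ} (hA : A.PosSemidef) (u : m → ℝ) :
    (deflate A u).PosSemidef := by
  classical
  set r := u ⬝ᵥ (A *ᵥ u) with hr
  set U := vecMulVec u u with hU
  have hAt : Aᵀ = A := hA.isHermitian
  have hUAU : U * (A * U) = r • U := by
    rw [mul_vecMulVec, vecMulVec_mul_vecMulVec, vecMulVec_smul]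
  have hquad : A * (U * (A * (U * A))) = r • (A * (U * A)) := by
    rw [← Matrix.mul_assoc A U A, ← Matrix.mul_assoc U, hUAU, Matrix.smul_mul, Matrix.mul_smul,
      Matrix.mul_assoc]
  have hrrr : r⁻¹ * (r⁻¹ * r) = r⁻¹ := by
    by_cases h : r = 0
    · rw [h, mul_zero, mul_zero, _root_.inv_zero]
    · rw [inv_mul_cancel₀ h, mul_one]
  have hcongr : deflate A u = (1 - r⁻¹ • (U * A))ᴴ * A * (1 - r⁻¹ • (U * A)) := by
    simp only [deflate, ← hr, ← hU, conjTranspose_eq_transpose_of_trivial, transpose_sub,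
      transpose_one, transpose_smul, transpose_mul, hAt, hU ▸ transpose_vecMulVec u u,
      Matrix.sub_mul, Matrix.mul_sub, Matrix.one_mul, Matrix.mul_one, Matrix.smul_mul,
      Matrix.mul_smul, Matrix.mul_assoc, hquad, smul_sub, smul_smul, hrrr]
    abel
  rw [hcongr]
  exact hA.conjTranspose_mul_mul_same _

end Deflation

section WeightedCov

lemma sum_filter_smul_eq {ι R M : Type*} [Fintype ι] [Semiring R] [AddCommMonoid M] [Module R M]
    {P : ι → Prop} [DecidablePred P] {w : ι → R} (hw : ∀ i, ¬P i → w i = 0) (f : ι → M) :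
    ∑ i with P i, w i • f i = ∑ i, w i • f i :=
  Finset.sum_filter_of_ne fun i _ hi ↦ by_contra fun hP ↦ hi (by rw [hw i hP, zero_smul])

variable {ι m k l : Type*} [Fintype ι]

lemma sum_smul_add_smul (w : ι → ℝ) (Q R : ι → Matrix m l ℝ) (x : ℝ) :
    ∑ i, w i • (Q + x • R) i = ∑ i, w i • Q i + x • ∑ i, w i • R i := by
  simp only [Pi.add_apply, Pi.smul_apply, smul_add, Finset.sum_add_distrib, Finset.smul_sum,
    smul_comm x (w _)]

variable [Fintype m]

/-- The weighted second moment `∑ wᵢ Pᵢ' B Qᵢ` of two families of matrices. -/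
def weightedMoment (w : ι → ℝ) (B : Matrix m m ℝ) (P : ι → Matrix m k ℝ)
    (Q : ι → Matrix m l ℝ) : Matrix k l ℝ :=
  ∑ i, w i • ((P i)ᵀ * B * Q i)

/-- The weighted covariance `∑ wᵢ Pᵢ' B Qᵢ - (∑ wᵢ Pᵢ)' B (∑ wᵢ Qᵢ)` of two families of matrices,
of which the matrices `C_{dij}` are instances. -/
def weightedCov (w : ι → ℝ) (B : Matrix m m ℝ) (P : ι → Matrix m k ℝ)
    (Q : ι → Matrix m l ℝ) : Matrix k l ℝ :=
  weightedMoment w B P Q - (∑ i, w i • P i)ᵀ * B * ∑ i, w i • Q i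

lemma weightedMoment_add_smul_right (w : ι → ℝ) (B : Matrix m m ℝ) (P : ι → Matrix m k ℝ)
    (Q R : ι → Matrix m l ℝ) (x : ℝ) :
    weightedMoment w B P (Q + x • R) = weightedMoment w B P Q + x • weightedMoment w B P R := by
  simp only [weightedMoment, Pi.add_apply, Pi.smul_apply, Matrix.mul_add, Matrix.mul_smul,
    smul_add, Finset.sum_add_distrib, Finset.smul_sum, smul_comm x (w _)]

lemma weightedCov_add_smul_right (w : ι → ℝ) (B : Matrix m m ℝ) (P : ι → Matrix m k ℝ)
    (Q R : ι → Matrix m l ℝ) (x : ℝ) :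
    weightedCov w B P (Q + x • R) = weightedCov w B P Q + x • weightedCov w B P R := by
  simp only [weightedCov, weightedMoment_add_smul_right, sum_smul_add_smul, Matrix.mul_add,
    Matrix.mul_smul]
  module

lemma weightedMoment_transpose (w : ι → ℝ) {B : Matrix m m ℝ} (hB : B.IsSymm)
    (P : ι → Matrix m k ℝ) (Q : ι → Matrix m l ℝ) :
    (weightedMoment w B P Q)ᵀ = weightedMoment w B Q P := by
  simp only [weightedMoment, transpose_sum, transpose_smul, transpose_mul, transpose_transpose,
    hB.eq, Matrix.mul_assoc]

lemma weightedCov_transpose (w : ι → ℝ) {B : Matrix m m ℝ} (hB : B.IsSymm)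
    (P : ι → Matrix m k ℝ) (Q : ι → Matrix m l ℝ) :
    (weightedCov w B P Q)ᵀ = weightedCov w B Q P := by
  simp only [weightedCov, transpose_sub, weightedMoment_transpose w hB, transpose_mul,
    transpose_transpose, hB.eq, Matrix.mul_assoc]

lemma weightedMoment_add_smul_self (w : ι → ℝ) {B : Matrix m m ℝ} (hB : B.IsSymm)
    (P Q : ι → Matrix m k ℝ) (x : ℝ) :
    weightedMoment w B (P + x • Q) (P + x • Q) = weightedMoment w B P P +
      x • (weightedMoment w B P Q + weightedMoment w B Q P) + x ^ 2 • weightedMoment w B Q Q := by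
  have hleft (R : ι → Matrix m k ℝ) : weightedMoment w B (P + x • Q) R =
      weightedMoment w B P R + x • weightedMoment w B Q R := by
    rw [← weightedMoment_transpose w hB, weightedMoment_add_smul_right, transpose_add,
      transpose_smul, weightedMoment_transpose w hB, weightedMoment_transpose w hB]
  simp only [weightedMoment_add_smul_right, hleft]
  module

lemma weightedCov_add_smul_self (w : ι → ℝ) {B : Matrix m m ℝ} (hB : B.IsSymm)
    (P Q : ι → Matrix m k ℝ) (x : ℝ) :
    weightedCov w B (P + x • Q) (P + x • Q) = weightedCov w B P P +
      x • (weightedCov w B P Q + weightedCov w B Q P) + x ^ 2 • weightedCov w B Q Q := by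
  have hleft (R : ι → Matrix m k ℝ) : weightedCov w B (P + x • Q) R =
      weightedCov w B P R + x • weightedCov w B Q R := by
    rw [← weightedCov_transpose w hB, weightedCov_add_smul_right, transpose_add,
      transpose_smul, weightedCov_transpose w hB, weightedCov_transpose w hB]
  simp only [weightedCov_add_smul_right, hleft]
  module

lemma weightedCov_eq_weightedMoment {w : ι → ℝ} {B : Matrix m m ℝ} {Q : ι → Matrix m l ℝ}
    (hQ : B * ∑ i, w i • Q i = 0) (P : ι → Matrix m k ℝ) :
    weightedCov w B P Q = weightedMoment w B P Q := by
  rw [weightedCov, Matrix.mul_assoc, hQ, Matrix.mul_zero, sub_zero]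

lemma weightedCov_eq_weightedMoment_sub_mean {w : ι → ℝ} (hw : ∑ i, w i = 1) (B : Matrix m m ℝ)
    (P : ι → Matrix m k ℝ) (Q : ι → Matrix m l ℝ) :
    weightedCov w B P Q =
      weightedMoment w B (fun i ↦ P i - ∑ j, w j • P j) (fun i ↦ Q i - ∑ j, w j • Q j) := by
  set M := ∑ j, w j • P j with hM
  set N := ∑ j, w j • Q j with hN
  have hterm (i : ι) : w i • ((P i - M)ᵀ * B * (Q i - N)) = w i • ((P i)ᵀ * B * Q i)
      - (w i • P i)ᵀ * (B * N) - Mᵀ * B * (w i • Q i) + w i • (Mᵀ * B * N) := by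
    simp only [transpose_sub, transpose_smul, Matrix.sub_mul, Matrix.mul_sub, Matrix.smul_mul,
      Matrix.mul_smul, smul_sub, Matrix.mul_assoc]
    abel
  have hP : ∑ i, (w i • P i)ᵀ * (B * N) = Mᵀ * (B * N) := by
    rw [← Matrix.sum_mul, ← transpose_sum, ← hM]
  have hQ : ∑ i, Mᵀ * B * (w i • Q i) = Mᵀ * B * N := by rw [← Matrix.mul_sum, ← hN]
  have hMN : ∑ i, w i • (Mᵀ * B * N) = Mᵀ * B * N := by rw [← Finset.sum_smul, hw, one_smul]
  rw [weightedMoment, Finset.sum_congr rfl fun i _ ↦ hterm i, Finset.sum_add_distrib,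
    Finset.sum_sub_distrib, Finset.sum_sub_distrib, hP, hQ, hMN, sub_add_cancel, weightedCov,
    ← hM, ← hN, Matrix.mul_assoc _ B, weightedMoment]

lemma posSemidef_weightedMoment_self {w : ι → ℝ} (hw : ∀ i, 0 ≤ w i) {B : Matrix m m ℝ}
    (hB : B.PosSemidef) (P : ι → Matrix m k ℝ) [Finite k] : (weightedMoment w B P P).PosSemidef :=
  posSemidef_sum _ fun i _ ↦ (hB.conjTranspose_mul_mul_same (P i)).smul (hw i)

lemma posSemidef_weightedCov_self {w : ι → ℝ} (hw : ∀ i, 0 ≤ w i) (hw₁ : ∑ i, w i = 1)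
    {B : Matrix m m ℝ} (hB : B.PosSemidef) (P : ι → Matrix m k ℝ) [Finite k] :
    (weightedCov w B P P).PosSemidef := by
  rw [weightedCov_eq_weightedMoment_sub_mean hw₁]
  exact posSemidef_weightedMoment_self hw hB _

lemma dotProduct_weightedCov_mulVec_le [Fintype k] (w : ι → ℝ) {B : Matrix m m ℝ}
    (hB : B.PosSemidef) (P : ι → Matrix m k ℝ) (v : k → ℝ) :
    v ⬝ᵥ (weightedCov w B P P *ᵥ v) ≤ v ⬝ᵥ (weightedMoment w B P P *ᵥ v) := by
  rw [weightedCov, sub_mulVec, dotProduct_sub, sub_le_self_iff]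
  exact (hB.conjTranspose_mul_mul_same _).dotProduct_mulVec_nonneg v

end WeightedCov

section Contrasts

variable {k : Type*} [Fintype k]

/-- The values at normalized treatment contrasts of the quadratic form of `C`; the E-criterion
`m_d` is the infimum of this set for the information matrix `C`. -/
def contrastRange (C : Matrix k k ℝ) : Set ℝ :=
  {v | ∃ l : k → ℝ, ∑ i, l i = 0 ∧ l ⬝ᵥ l = 1 ∧ v = l ⬝ᵥ (C *ᵥ l)}

/-- The Rayleigh quotient `τ' A τ / τ' τ`, with the junk value `0` at `τ = 0`. -/
def rayleigh (A : Matrix k k ℝ) (τ : k → ℝ) : ℝ := τ ⬝ᵥ (A *ᵥ τ) / (τ ⬝ᵥ τ)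

lemma mul_self_apply_le_dotProduct_self (τ : k → ℝ) (i : k) : τ i * τ i ≤ τ ⬝ᵥ τ :=
  Finset.single_le_sum (f := fun i ↦ τ i * τ i) (fun _ _ ↦ mul_self_nonneg _) (Finset.mem_univ i)

lemma isCompact_dotProduct_self_eq_one : IsCompact {l : k → ℝ | l ⬝ᵥ l = 1} := by
  refine (isCompact_Icc (a := (-1 : k → ℝ)) (b := 1)).of_isClosed_subset
    (isClosed_eq (continuous_id.dotProduct continuous_id) continuous_const) fun l hl ↦ ?_
  have habs (i : k) : |l i| ≤ 1 := abs_le_one_iff_mul_self_le_one.2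
    ((mul_self_apply_le_dotProduct_self l i).trans_eq hl)
  exact ⟨fun i ↦ (abs_le.1 (habs i)).1, fun i ↦ (abs_le.1 (habs i)).2⟩

lemma bddBelow_contrastRange (C : Matrix k k ℝ) : BddBelow (contrastRange C) := by
  have hcont : Continuous fun l : k → ℝ ↦ l ⬝ᵥ (C *ᵥ l) :=
    continuous_id.dotProduct (continuous_const.matrix_mulVec continuous_id)
  refine (isCompact_dotProduct_self_eq_one.bddBelow_image hcont.continuousOn).mono ?_
  rintro v ⟨l, -, hl, rfl⟩
  exact ⟨l, hl, rfl⟩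

lemma rayleigh_mem_contrastRange (C : Matrix k k ℝ) {τ : k → ℝ} (hsum : ∑ i, τ i = 0)
    (hτ : τ ≠ 0) : rayleigh C τ ∈ contrastRange C := by
  have hpos : 0 < τ ⬝ᵥ τ := dotProduct_star_self_pos_iff.2 hτ
  have hsqrt : (√(τ ⬝ᵥ τ))⁻¹ * (√(τ ⬝ᵥ τ))⁻¹ = (τ ⬝ᵥ τ)⁻¹ := by
    rw [← mul_inv, Real.mul_self_sqrt hpos.le]
  refine ⟨(√(τ ⬝ᵥ τ))⁻¹ • τ, ?_, ?_, ?_⟩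
  · simp only [Pi.smul_apply, smul_eq_mul, ← Finset.mul_sum, hsum, mul_zero]
  · rw [dotProduct_smul, smul_dotProduct, smul_smul, hsqrt, smul_eq_mul, inv_mul_cancel₀ hpos.ne']
  · rw [mulVec_smul, dotProduct_smul, smul_dotProduct, smul_smul, hsqrt, smul_eq_mul, rayleigh,
      div_eq_inv_mul]

lemma sInf_contrastRange_le_rayleigh (C : Matrix k k ℝ) {τ : k → ℝ} (hsum : ∑ i, τ i = 0)
    (hτ : τ ≠ 0) : sInf (contrastRange C) ≤ rayleigh C τ :=
  csInf_le (bddBelow_contrastRange C) (rayleigh_mem_contrastRange C hsum hτ)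

lemma rayleigh_le_rayleigh {A C : Matrix k k ℝ} {τ : k → ℝ}
    (h : τ ⬝ᵥ (A *ᵥ τ) ≤ τ ⬝ᵥ (C *ᵥ τ)) : rayleigh A τ ≤ rayleigh C τ :=
  div_le_div_of_nonneg_right h (dotProduct_star_self_nonneg τ)

lemma Bmat_transpose (t : ℕ) : (Bmat t)ᵀ = Bmat t := by
  have hJ : (Jmat t)ᵀ = Jmat t := rfl
  rw [Bmat, transpose_sub, transpose_one, transpose_smul, hJ]

lemma Bmat_mulVec_of_sum_eq_zero {t : ℕ} {l : Fin t → ℝ} (hl : ∑ i, l i = 0) :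
    Bmat t *ᵥ l = l := by
  have hJ : Jmat t *ᵥ l = 0 := by
    ext i
    simp only [Jmat, mulVec, dotProduct, of_apply, one_mul, hl, Pi.zero_apply]
  rw [Bmat, sub_mulVec, one_mulVec, smul_mulVec, hJ, smul_zero, sub_zero]

lemma Bmat_mul_self (t : ℕ) : Bmat t * Bmat t = Bmat t := by
  have hJ : Jmat t * Jmat t = (t : ℝ) • Jmat t := by
    ext i j
    simp [Jmat, mul_apply]
  have ht : (t : ℝ)⁻¹ * ((t : ℝ)⁻¹ * t) = (t : ℝ)⁻¹ := by
    rcases eq_or_ne (t : ℝ) 0 with h | h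
    · rw [h, mul_zero, mul_zero, _root_.inv_zero]
    · rw [inv_mul_cancel₀ h, mul_one]
  simp only [Bmat, Matrix.mul_sub, Matrix.sub_mul, Matrix.one_mul, Matrix.mul_one,
    Matrix.mul_smul, Matrix.smul_mul, hJ, smul_sub, smul_smul, ht]
  abel

lemma sInf_contrastRange_smul_Bmat_add {t : ℕ} (c : ℝ) {D : Matrix (Fin t) (Fin t) ℝ}
    (hD : D.PosSemidef) {τ : Fin t → ℝ} (hDτ : D *ᵥ τ = 0) (hsum : ∑ i, τ i = 0) (hτ : τ ≠ 0) :
    sInf (contrastRange (c • Bmat t + D)) = c := by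
  have hquad {l : Fin t → ℝ} (hl : ∑ i, l i = 0) :
      l ⬝ᵥ ((c • Bmat t + D) *ᵥ l) = c * (l ⬝ᵥ l) + l ⬝ᵥ (D *ᵥ l) := by
    rw [add_mulVec, smul_mulVec, Bmat_mulVec_of_sum_eq_zero hl, dotProduct_add, dotProduct_smul,
      smul_eq_mul]
  refine IsLeast.csInf_eq ⟨?_, ?_⟩
  · have hray : rayleigh (c • Bmat t + D) τ = c := by
      rw [rayleigh, hquad hsum, hDτ, dotProduct_zero, add_zero,
        mul_div_cancel_right₀ _ ((dotProduct_self_eq_zero (v := τ)).not.2 hτ)]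
    have hmem := rayleigh_mem_contrastRange (c • Bmat t + D) hsum hτ
    rwa [hray] at hmem
  · rintro v ⟨l, hl, hl₁, rfl⟩
    rw [hquad hl, hl₁, mul_one, le_add_iff_nonneg_right]
    exact hD.dotProduct_mulVec_nonneg l

end Contrasts

section DirectionMoment

variable {k : Type*}

lemma exists_eq_smul_one_add_smul_of_submatrix_perm {R : Type*} [Ring R] [DecidableEq k]
    [Nontrivial k] {M : Matrix k k R} (hM : ∀ σ : Equiv.Perm k, M.submatrix σ σ = M) :
    ∃ a b : R, M = a • 1 + b • Matrix.of fun _ _ ↦ 1 := by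
  obtain ⟨i₀, j₀, h₀⟩ := exists_pair_ne k
  have htwo {i j : k} (hij : i ≠ j) : ∃ σ : Equiv.Perm k, σ i₀ = i ∧ σ j₀ = j :=
    MulAction.is_two_pretransitive_iff.1 (Equiv.Perm.isMultiplyPretransitive k 2) h₀ hij
  have hdiag (i : k) : M i i = M i₀ i₀ := by
    obtain ⟨σ, hσ⟩ := MulAction.exists_smul_eq (Equiv.Perm k) i₀ i
    rw [← hσ]
    exact congrFun₂ (hM σ) i₀ i₀
  have hoff {i j : k} (hij : i ≠ j) : M i j = M i₀ j₀ := by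
    obtain ⟨σ, hσi, hσj⟩ := htwo hij
    rw [← hσi, ← hσj]
    exact congrFun₂ (hM σ) i₀ j₀
  refine ⟨M i₀ i₀ - M i₀ j₀, M i₀ j₀, ?_⟩
  ext i j
  rcases eq_or_ne i j with rfl | hij
  · simp [hdiag i]
  · simp [hoff hij, hij]

variable [Fintype k]

/-- The second moment `∫ τ τ' / (τ' τ) dg` of the direction of a random vector with law `g`. -/
def directionMoment (g : Measure (k → ℝ)) : Matrix k k ℝ :=
  Matrix.of fun i j ↦ ∫ τ, τ i * τ j / (τ ⬝ᵥ τ) ∂g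

lemma measurable_mul_div_dotProduct_self (i j : k) :
    Measurable fun τ : k → ℝ ↦ τ i * τ j / (τ ⬝ᵥ τ) := by
  unfold dotProduct
  fun_prop

lemma integrable_mul_div_dotProduct_self (g : Measure (k → ℝ)) [IsFiniteMeasure g] (i j : k) :
    Integrable (fun τ ↦ τ i * τ j / (τ ⬝ᵥ τ)) g := by
  refine .of_bound (measurable_mul_div_dotProduct_self i j).aestronglyMeasurable 1
    (ae_of_all _ fun τ ↦ ?_)
  have hi := mul_self_apply_le_dotProduct_self τ i
  have hj := mul_self_apply_le_dotProduct_self τ j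
  have hnonneg : 0 ≤ τ ⬝ᵥ τ := (mul_self_nonneg _).trans hi
  rw [Real.norm_eq_abs, abs_div, abs_of_nonneg hnonneg]
  refine div_le_one_of_le₀ (abs_le.2 ⟨?_, ?_⟩) hnonneg
  · nlinarith [sq_nonneg (τ i + τ j)]
  · nlinarith [sq_nonneg (τ i - τ j)]

lemma rayleigh_eq_sum (A : Matrix k k ℝ) (τ : k → ℝ) :
    rayleigh A τ = ∑ i, ∑ j, A i j * (τ j * τ i / (τ ⬝ᵥ τ)) := by
  rw [rayleigh]
  generalize τ ⬝ᵥ τ = r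
  simp only [dotProduct, mulVec, Finset.mul_sum, Finset.sum_div]
  exact Finset.sum_congr rfl fun i _ ↦ Finset.sum_congr rfl fun j _ ↦ by ring

lemma integrable_rayleigh (g : Measure (k → ℝ)) [IsFiniteMeasure g] (A : Matrix k k ℝ) :
    Integrable (rayleigh A) g := by
  rw [funext (rayleigh_eq_sum A)]
  exact integrable_finsetSum _ fun i _ ↦ integrable_finsetSum _ fun j _ ↦
    (integrable_mul_div_dotProduct_self g j i).const_mul _

lemma integral_rayleigh (g : Measure (k → ℝ)) [IsFiniteMeasure g] (A : Matrix k k ℝ) :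
    ∫ τ, rayleigh A τ ∂g = (A * directionMoment g).trace := by
  have hint (i j : k) : Integrable (fun τ : k → ℝ ↦ A i j * (τ j * τ i / (τ ⬝ᵥ τ))) g :=
    (integrable_mul_div_dotProduct_self g j i).const_mul _
  simp only [rayleigh_eq_sum, trace, diag_apply, mul_apply, directionMoment, of_apply]
  rw [integral_finsetSum _ fun i _ ↦ integrable_finsetSum _ fun j _ ↦ hint i j]
  refine Finset.sum_congr rfl fun i _ ↦ ?_
  rw [integral_finsetSum _ fun j _ ↦ hint i j]
  exact Finset.sum_congr rfl fun j _ ↦ integral_const_mul _ _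

lemma directionMoment_submatrix {g : Measure (k → ℝ)} {σ : Equiv.Perm k}
    (hg : Measure.map (fun τ i ↦ τ (σ i)) g = g) :
    (directionMoment g).submatrix σ σ = directionMoment g := by
  ext i j
  have hmap : Measurable fun (τ : k → ℝ) i ↦ τ (σ i) := by fun_prop
  have hnorm (τ : k → ℝ) : (fun i ↦ τ (σ i)) ⬝ᵥ (fun i ↦ τ (σ i)) = τ ⬝ᵥ τ :=
    Equiv.sum_comp σ fun i ↦ τ i * τ i
  simp only [directionMoment, submatrix_apply, of_apply]
  conv_rhs => rw [← hg]
  rw [integral_map hmap.aemeasurable (measurable_mul_div_dotProduct_self i j).aestronglyMeasurable]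
  simp only [hnorm]

lemma directionMoment_mulVec_one {g : Measure (k → ℝ)} [IsFiniteMeasure g]
    (hg : ∀ᵐ τ ∂g, ∑ i, τ i = 0) : directionMoment g *ᵥ 1 = 0 := by
  ext i
  simp only [directionMoment, mulVec, dotProduct_one, of_apply, Pi.zero_apply]
  rw [← integral_finsetSum _ fun j _ ↦ integrable_mul_div_dotProduct_self g i j]
  refine integral_eq_zero_of_ae ?_
  filter_upwards [hg] with τ hτ
  rw [← Finset.sum_div, ← Finset.mul_sum, hτ, mul_zero, zero_div, Pi.zero_apply]

lemma trace_directionMoment {g : Measure (k → ℝ)} [IsProbabilityMeasure g]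
    (hg : ∀ᵐ τ ∂g, τ ≠ 0) : (directionMoment g).trace = 1 := by
  have hone : ∀ᵐ τ ∂g, ∑ i, τ i * τ i / (τ ⬝ᵥ τ) = 1 := by
    filter_upwards [hg] with τ hτ
    rw [← Finset.sum_div]
    exact div_self ((dotProduct_self_eq_zero (v := τ)).not.2 hτ)
  simp only [trace, diag_apply, directionMoment, of_apply]
  rw [← integral_finsetSum _ fun i _ ↦ integrable_mul_div_dotProduct_self g i i,
    integral_congr_ae hone, integral_const, probReal_univ, one_smul]

end DirectionMoment

namespace IsExchangeablePrior

variable {t : ℕ} {g : Measure (Fin t → ℝ)}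

lemma isProbabilityMeasure (hg : IsExchangeablePrior g) : IsProbabilityMeasure g := hg.1

lemma ae_sum_eq_zero (hg : IsExchangeablePrior g) : ∀ᵐ τ ∂g, ∑ i, τ i = 0 :=
  Filter.Eventually.mono hg.2.1 fun _ h ↦ h.1

lemma ae_ne_zero (hg : IsExchangeablePrior g) : ∀ᵐ τ ∂g, τ ≠ 0 :=
  Filter.Eventually.mono hg.2.1 fun _ h ↦ h.2

lemma one_lt (hg : IsExchangeablePrior g) : 1 < t := by
  have := hg.isProbabilityMeasure
  obtain ⟨τ, hsum, hτ⟩ := (hg.ae_sum_eq_zero.and hg.ae_ne_zero).exists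
  by_contra! ht
  have : Subsingleton (Fin t) := Fin.subsingleton_iff_le_one.2 ht
  exact hτ (funext fun i ↦ by rwa [Fintype.sum_subsingleton _ i] at hsum)

lemma directionMoment_eq (hg : IsExchangeablePrior g) :
    directionMoment g = ((t : ℝ) - 1)⁻¹ • Bmat t := by
  have := hg.isProbabilityMeasure
  have : Nontrivial (Fin t) := Fin.nontrivial_iff_two_le.2 hg.one_lt
  have ht : (1 : ℝ) < t := mod_cast hg.one_lt
  obtain ⟨a, b, hM⟩ := exists_eq_smul_one_add_smul_of_submatrix_perm
    fun σ ↦ directionMoment_submatrix (hg.2.2 σ)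
  have hrow : a + t * b = 0 := by
    have h := congrFun (directionMoment_mulVec_one hg.ae_sum_eq_zero)
      ⟨0, zero_lt_one.trans hg.one_lt⟩
    simpa [hM, add_mulVec, smul_mulVec, mulVec, dotProduct, one_apply,
      Finset.sum_add_distrib] using h
  have htrace : t * (a + b) = 1 := by
    have h := trace_directionMoment hg.ae_ne_zero
    simpa [hM, trace, mul_add, add_comm] using h
  have hb : b = -(a * (t : ℝ)⁻¹) := by
    field_simp
    linarith
  have ha : a = ((t : ℝ) - 1)⁻¹ := eq_inv_of_mul_eq_one_left (by linarith)
  rw [hM, hb, ← ha, Bmat, Jmat]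
  module

lemma integral_rayleigh_eq (hg : IsExchangeablePrior g) (A : Matrix (Fin t) (Fin t) ℝ) :
    ∫ τ, rayleigh A τ ∂g = (A * Bmat t).trace / ((t : ℝ) - 1) := by
  have := hg.isProbabilityMeasure
  rw [integral_rayleigh, hg.directionMoment_eq, Matrix.mul_smul, trace_smul, smul_eq_mul,
    div_eq_inv_mul]

end IsExchangeablePrior

section Design

variable {p t n : ℕ} {S : Matrix (Fin p) (Fin p) ℝ} {w : TrtSeq p t → ℝ}

lemma Btil_eq_deflate (S : Matrix (Fin p) (Fin p) ℝ) : Btil S = deflate S⁻¹ fun _ ↦ 1 := by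
  have hJ : Jmat p = vecMulVec (fun _ ↦ 1) fun _ ↦ 1 := by
    ext i j
    simp only [Jmat, of_apply, vecMulVec_apply, mul_one]
  rw [Btil, deflate, hJ]

lemma posSemidef_Btil (hS : S.PosDef) : (Btil S).PosSemidef :=
  Btil_eq_deflate S ▸ posSemidef_deflate hS.inv.posSemidef _

lemma isSymm_Btil (hS : S.PosDef) : (Btil S).IsSymm := (posSemidef_Btil hS).isHermitian

/-- The incidence matrix `G_{i+1}(s) B_t` centred over treatments. -/
def centredG (i : Fin 2) (s : TrtSeq p t) : Matrix (Fin p) (Fin t) ℝ := Gmat i s * Bmat t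

/-- The centred incidence matrix `(T_s + x F_s) B_t` of the proportional model with carryover
ratio `x`. -/
def centredProp (x : ℝ) : TrtSeq p t → Matrix (Fin p) (Fin t) ℝ := centredG 0 + x • centredG 1

lemma centredProp_apply (x : ℝ) (s : TrtSeq p t) :
    centredProp x s = (Tmat s + x • Fmat s) * Bmat t := by
  simp [centredProp, centredG, Gmat, Matrix.add_mul]

lemma centredProp_mul_Bmat (x : ℝ) (s : TrtSeq p t) :
    centredProp x s * Bmat t = centredProp x s := by
  rw [centredProp_apply, Matrix.mul_assoc, Bmat_mul_self]

lemma Chat_eq (S : Matrix (Fin p) (Fin p) ℝ) (s : TrtSeq p t) (i j : Fin 2) :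
    Chat S s i j = (centredG i s)ᵀ * Btil S * centredG j s := by
  simp only [Chat, centredG, transpose_mul, Bmat_transpose, Matrix.mul_assoc]

lemma weightedMoment_centredG (S : Matrix (Fin p) (Fin p) ℝ) (w : TrtSeq p t → ℝ) (i j : Fin 2) :
    weightedMoment w (Btil S) (centredG i) (centredG j) = ∑ s, w s • Chat S s i j := by
  simp only [weightedMoment, Chat_eq]

lemma CD_eq (n : ℕ) (S : Matrix (Fin p) (Fin p) ℝ) (w : TrtSeq p t → ℝ) (i j : Fin 2) :
    CD n S w i j = (n : ℝ) • weightedCov w (Btil S) (centredG i) (centredG j) := by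
  rw [weightedCov, weightedMoment_centredG, smul_sub]
  rfl

lemma CD_transpose (hS : S.PosDef) (i j : Fin 2) : (CD n S w i j)ᵀ = CD n S w j i := by
  rw [CD_eq, CD_eq, transpose_smul, weightedCov_transpose w (isSymm_Btil hS)]

lemma posSemidef_CD_self (hS : S.PosDef) (hw : IsDesign w) (i : Fin 2) :
    (CD n S w i i).PosSemidef := by
  rw [CD_eq]
  exact (posSemidef_weightedCov_self hw.1 hw.2 (posSemidef_Btil hS) _).smul n.cast_nonneg

lemma trace_weightedMoment_centredProp (hS : S.PosDef) (w : TrtSeq p t → ℝ) (x : ℝ) :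
    (weightedMoment w (Btil S) (centredProp x) (centredProp x)).trace = qD S w x := by
  have hsymm (s : TrtSeq p t) : (Chat S s 1 0).trace = (Chat S s 0 1).trace := by
    rw [← trace_transpose, Chat_eq, transpose_mul, transpose_mul, transpose_transpose,
      (isSymm_Btil hS).eq, ← Matrix.mul_assoc, ← Chat_eq]
  rw [centredProp, weightedMoment_add_smul_self w (isSymm_Btil hS)]
  simp only [weightedMoment_centredG, trace_add, trace_smul, trace_sum, smul_eq_mul, hsymm, qD,
    qSeq, cseq, Finset.mul_sum, ← Finset.sum_add_distrib]
  exact Finset.sum_congr rfl fun s _ ↦ by ring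

lemma weightedMoment_centredProp_mul_Bmat (B : Matrix (Fin p) (Fin p) ℝ) (w : TrtSeq p t → ℝ)
    (x : ℝ) : weightedMoment w B (centredProp x) (centredProp x) * Bmat t =
      weightedMoment w B (centredProp x) (centredProp x) := by
  simp only [weightedMoment, Matrix.sum_mul, Matrix.smul_mul, Matrix.mul_assoc,
    centredProp_mul_Bmat]

lemma dotProduct_CD_mulVec_comm (hS : S.PosDef) (i j : Fin 2) (u v : Fin t → ℝ) :
    u ⬝ᵥ (CD n S w i j *ᵥ v) = v ⬝ᵥ (CD n S w j i *ᵥ u) := by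
  rw [← CD_transpose hS i j, dotProduct_transpose_mulVec]

-- Profiling out the carryover ratio makes the information about `τ` itself free of `l0`.
lemma dotProduct_CInfo_mulVec_self (hS : S.PosDef) (l0 : ℝ) {τ : Fin t → ℝ}
    (hτ : τ ⬝ᵥ (CD n S w 1 1 *ᵥ τ) ≠ 0) :
    τ ⬝ᵥ (CInfo n S w τ l0 *ᵥ τ) = τ ⬝ᵥ (CD n S w 0 0 *ᵥ τ) -
      (τ ⬝ᵥ (CD n S w 0 1 *ᵥ τ)) ^ 2 / τ ⬝ᵥ (CD n S w 1 1 *ᵥ τ) := by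
  simp only [CInfo, sub_mulVec, add_mulVec, smul_mulVec, ← mulVec_mulVec, vecMulVec_mulVec,
    dotProduct_add, dotProduct_sub, dotProduct_smul, mulVec_smul, smul_eq_mul, op_smul_eq_smul,
    dotProduct_CD_mulVec_comm hS 1 0]
  field_simp
  ring

lemma smul_weightedCov_centredProp (hS : S.PosDef) (n : ℕ) (w : TrtSeq p t → ℝ) (x : ℝ) :
    (n : ℝ) • weightedCov w (Btil S) (centredProp x) (centredProp x) =
      CD n S w 0 0 + x • (CD n S w 0 1 + CD n S w 1 0) + x ^ 2 • CD n S w 1 1 := by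
  rw [centredProp, weightedCov_add_smul_self w (isSymm_Btil hS)]
  simp only [CD_eq]
  module

lemma mD_eq_sInf_contrastRange (n : ℕ) (S : Matrix (Fin p) (Fin p) ℝ) (w : TrtSeq p t → ℝ)
    (l0 : ℝ) (τ : Fin t → ℝ) : mD n S w l0 τ = sInf (contrastRange (CInfo n S w τ l0)) := rfl

lemma mD_le_rayleigh (hS : S.PosDef) (x l0 : ℝ) {τ : Fin t → ℝ} (hsum : ∑ i, τ i = 0)
    (hτ : τ ≠ 0) (hpos : 0 < τ ⬝ᵥ (CD n S w 1 1 *ᵥ τ)) :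
    mD n S w l0 τ ≤
      rayleigh ((n : ℝ) • weightedMoment w (Btil S) (centredProp x) (centredProp x)) τ := by
  rw [mD_eq_sInf_contrastRange]
  refine (sInf_contrastRange_le_rayleigh _ hsum hτ).trans (rayleigh_le_rayleigh ?_)
  calc τ ⬝ᵥ (CInfo n S w τ l0 *ᵥ τ)
      = τ ⬝ᵥ (CD n S w 0 0 *ᵥ τ) -
          (τ ⬝ᵥ (CD n S w 0 1 *ᵥ τ)) ^ 2 / τ ⬝ᵥ (CD n S w 1 1 *ᵥ τ) :=
        dotProduct_CInfo_mulVec_self hS l0 hpos.ne'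
    _ ≤ τ ⬝ᵥ (CD n S w 0 0 *ᵥ τ) + 2 * x * τ ⬝ᵥ (CD n S w 0 1 *ᵥ τ) +
          x ^ 2 * τ ⬝ᵥ (CD n S w 1 1 *ᵥ τ) := by
        rw [sub_le_iff_le_add, ← sub_le_iff_le_add', le_div_iff₀ hpos]
        nlinarith [sq_nonneg (τ ⬝ᵥ (CD n S w 0 1 *ᵥ τ) + x * τ ⬝ᵥ (CD n S w 1 1 *ᵥ τ))]
    _ = τ ⬝ᵥ (((n : ℝ) • weightedCov w (Btil S) (centredProp x) (centredProp x)) *ᵥ τ) := by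
        simp only [smul_weightedCov_centredProp hS, add_mulVec, smul_mulVec, dotProduct_add,
          dotProduct_smul, smul_eq_mul, dotProduct_CD_mulVec_comm hS 1 0]
        ring
    _ ≤ τ ⬝ᵥ (((n : ℝ) • weightedMoment w (Btil S) (centredProp x) (centredProp x)) *ᵥ τ) := by
        simp only [smul_mulVec, dotProduct_smul]
        exact smul_le_smul_of_nonneg_left
          (dotProduct_weightedCov_mulVec_le w (posSemidef_Btil hS) _ τ) n.cast_nonneg

lemma Ecrit_le_qD {g : Measure (Fin t → ℝ)} {l0 : ℝ} (hS : S.PosDef) (hg : IsExchangeablePrior g)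
    (hw : EAdmissible n S g l0 w) (x : ℝ) :
    Ecrit n S g l0 w ≤ n * (qD S w x / ((t : ℝ) - 1)) := by
  have := hg.isProbabilityMeasure
  set M := weightedMoment w (Btil S) (centredProp x) (centredProp x) with hM
  calc Ecrit n S g l0 w ≤ ∫ τ, rayleigh ((n : ℝ) • M) τ ∂g := by
        refine integral_mono_ae hw.2.2 (integrable_rayleigh g _) ?_
        filter_upwards [hg.ae_sum_eq_zero, hg.ae_ne_zero, hw.2.1] with τ hsum hτ hpos
        exact mD_le_rayleigh hS x l0 hsum hτ hpos
    _ = n * (qD S w x / ((t : ℝ) - 1)) := by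
        rw [hg.integral_rayleigh_eq, Matrix.smul_mul, hM, weightedMoment_centredProp_mul_Bmat,
          trace_smul, trace_weightedMoment_centredProp hS, smul_eq_mul, mul_div_assoc]

lemma qD_le {x y : ℝ} (hw : IsDesign w) (hy : ∀ s : TrtSeq p t, qSeq S s x ≤ y) :
    qD S w x ≤ y :=
  calc qD S w x ≤ ∑ s, w s * y :=
        Finset.sum_le_sum fun s _ ↦ mul_le_mul_of_nonneg_left (hy s) (hw.1 s)
    _ = y := by rw [← Finset.sum_mul, hw.2, one_mul]

lemma qSeq_le_qMax (S : Matrix (Fin p) (Fin p) ℝ) (s : TrtSeq p t) (x : ℝ) :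
    qSeq S s x ≤ qMax p t S x :=
  le_csSup (Set.finite_range _).bddAbove ⟨s, rfl⟩

lemma CD_add_smul_CD {x : ℝ}
    (h : ∑ s : TrtSeq p t, w s • (Btil S * (Tmat s + x • Fmat s) * Bmat t) = 0) (i : Fin 2) :
    CD n S w i 0 + x • CD n S w i 1 =
      (n : ℝ) • ∑ s, w s • (Chat S s i 0 + x • Chat S s i 1) := by
  have hmean : Btil S * ∑ s, w s • centredProp x s = 0 := by
    simpa only [Matrix.mul_sum, Matrix.mul_smul, centredProp_apply, ← Matrix.mul_assoc] using h
  calc CD n S w i 0 + x • CD n S w i 1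
      = (n : ℝ) • weightedCov w (Btil S) (centredG i) (centredProp x) := by
        rw [centredProp, weightedCov_add_smul_right, CD_eq, CD_eq, smul_add, smul_comm x]
    _ = (n : ℝ) • weightedMoment w (Btil S) (centredG i) (centredProp x) := by
        rw [weightedCov_eq_weightedMoment hmean]
    _ = (n : ℝ) • ∑ s, w s • (Chat S s i 0 + x • Chat S s i 1) := by
        simp only [centredProp, weightedMoment_add_smul_right, weightedMoment_centredG, smul_add,
          Finset.sum_add_distrib, Finset.smul_sum, smul_comm x (w _)]

lemma CInfo_eq_smul_Bmat_add_deflate (hS : S.PosDef) {x c : ℝ}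
    (h₀ : CD n S w 0 0 + x • CD n S w 0 1 = c • Bmat t)
    (h₁ : CD n S w 1 0 + x • CD n S w 1 1 = 0) (τ : Fin t → ℝ) (l0 : ℝ) :
    CInfo n S w τ l0 = c • Bmat t + (l0 - x) ^ 2 • deflate (CD n S w 1 1) τ := by
  have h10 : CD n S w 1 0 = -x • CD n S w 1 1 := by
    rw [neg_smul]
    exact eq_neg_of_add_eq_zero_left h₁
  have h01 : CD n S w 0 1 = -x • CD n S w 1 1 := by
    rw [← CD_transpose hS, h10, transpose_smul, CD_transpose hS]
  have h00 : CD n S w 0 0 = c • Bmat t + x ^ 2 • CD n S w 1 1 := by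
    rw [← h₀, h01]
    module
  have hshift : -x • CD n S w 1 1 + l0 • CD n S w 1 1 = (l0 - x) • CD n S w 1 1 := by module
  rw [CInfo, deflate, h00, h01, h10, hshift]
  simp only [Matrix.smul_mul, Matrix.mul_smul]
  module

lemma Ecrit_eq_of_CD_eq {g : Measure (Fin t → ℝ)} (hS : S.PosDef) (hg : IsExchangeablePrior g)
    (hw : IsDesign w) {x c : ℝ} (h₀ : CD n S w 0 0 + x • CD n S w 0 1 = c • Bmat t)
    (h₁ : CD n S w 1 0 + x • CD n S w 1 1 = 0) (l0 : ℝ) : Ecrit n S g l0 w = c := by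
  have := hg.isProbabilityMeasure
  have hmD : ∀ᵐ τ ∂g, mD n S w l0 τ = c := by
    filter_upwards [hg.ae_sum_eq_zero, hg.ae_ne_zero] with τ hsum hτ
    have hpsd := posSemidef_CD_self (n := n) hS hw 1
    rw [mD_eq_sInf_contrastRange, CInfo_eq_smul_Bmat_add_deflate hS h₀ h₁]
    refine sInf_contrastRange_smul_Bmat_add c
      ((posSemidef_deflate hpsd τ).smul (sq_nonneg (l0 - x))) ?_ hsum hτ
    rw [smul_mulVec, deflate_mulVec_self hpsd, smul_zero]
  rw [Ecrit, integral_congr_ae hmD, integral_const, probReal_univ, one_smul]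

end Design

theorem stmt8_general {p t n : ℕ} {S : Matrix (Fin p) (Fin p) ℝ} (hS : S.PosDef)
    {w : TrtSeq p t → ℝ} (hw : IsDesign w) {x x₀ y : ℝ}
    (hy : ∀ s : TrtSeq p t, qSeq S s x₀ ≤ y)
    (h1 : ∑ s, w s • (Chat S s 0 0 + x • Chat S s 0 1) = (y / ((t : ℝ) - 1)) • Bmat t)
    (h2 : ∑ s, w s • (Chat S s 1 0 + x • Chat S s 1 1) = 0)
    (h3 : ∑ s, w s • (Btil S * (Tmat s + x • Fmat s) * Bmat t) = 0)
    (l0 : ℝ) {g : Measure (Fin t → ℝ)} (hg : IsExchangeablePrior g) :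
    EOptimal n S g l0 w := by
  intro w' hw'
  have ht : (0 : ℝ) ≤ (t : ℝ) - 1 := sub_nonneg.2 (mod_cast hg.one_lt.le)
  have h₀ : CD n S w 0 0 + x • CD n S w 0 1 = (n * (y / ((t : ℝ) - 1))) • Bmat t := by
    rw [CD_add_smul_CD h3, h1, smul_smul]
  have h₁ : CD n S w 1 0 + x • CD n S w 1 1 = 0 := by rw [CD_add_smul_CD h3, h2, smul_zero]
  calc Ecrit n S g l0 w' ≤ n * (qD S w' x₀ / ((t : ℝ) - 1)) := Ecrit_le_qD hS hg hw' x₀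
    _ ≤ n * (y / ((t : ℝ) - 1)) := by
        gcongr
        exact qD_le hw'.1 hy
    _ = Ecrit n S g l0 w := (Ecrit_eq_of_CD_eq hS hg hw h₀ h₁ l0).symm

/-- the five conditions (for some real `x`) imply `E_{g,λ0}`-optimality
for every `λ0` and every exchangeable prior `g`. -/
theorem stmt8 (p t n : ℕ) (hp : 2 ≤ p) (ht : 3 ≤ t) (hn : 1 ≤ n)
    (S : Matrix (Fin p) (Fin p) ℝ) (hS : S.PosDef)
    (xstar : ℝ) (hxs : qMax p t S xstar = yStar p t S)
    (hxsu : ∀ x : ℝ, qMax p t S x = yStar p t S → x = xstar)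
    (w : TrtSeq p t → ℝ) (hw : IsDesign w) (x : ℝ)
    (h1 : ∑ s ∈ Finset.univ.filter (fun s : TrtSeq p t => qSeq S s xstar = yStar p t S),
        w s • (Chat S s 0 0 + x • Chat S s 0 1) = (yStar p t S / ((t : ℝ) - 1)) • Bmat t)
    (h2 : ∑ s ∈ Finset.univ.filter (fun s : TrtSeq p t => qSeq S s xstar = yStar p t S),
        w s • (Chat S s 1 0 + x • Chat S s 1 1) = 0)
    (h3 : ∑ s ∈ Finset.univ.filter (fun s : TrtSeq p t => qSeq S s xstar = yStar p t S),
        w s • (Btil S * (Tmat s + x • Fmat s) * Bmat t) = 0)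
    (h4 : ∑ s ∈ Finset.univ.filter (fun s : TrtSeq p t => qSeq S s xstar = yStar p t S),
        w s = 1)
    (h5 : ∀ s : TrtSeq p t, qSeq S s xstar ≠ yStar p t S → w s = 0) :
    ∀ (l0 : ℝ) (g : Measure (Fin t → ℝ)), IsExchangeablePrior g →
      EOptimal n S g l0 w := by
  have hQ (s : TrtSeq p t) : qSeq S s xstar ≤ yStar p t S := hxs ▸ qSeq_le_qMax S s xstar
  rw [sum_filter_smul_eq h5] at h1 h2 h3
  exact fun l0 _ hg ↦ stmt8_general hS hw hQ h1 h2 h3 l0 hg
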